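/- For all real x with |x| < 1 and |4x/(1+x)^2| < 1, and parameters a, b such that 2b is not zero or a negative integer, the identity (1+x)^{-2a} · ₂F₁(a, b; 2b; 4x/(1+x)^2) = ₂F₁(a, a-b+1/2; b+1/2; x²) holds. -/

import Mathlib

open scoped Nat

/-- Pochhammer symbol (rising factorial). -/
noncomputable def poch (a : ℝ) (n : ℕ) : ℝ := (ascPochhammer ℝ n).eval a

/-- Gauss hypergeometric series ₂F₁(a,b;c;z). -/
noncomputable def F (a b c z : ℝ) : ℝ :=
  ∑' n : ℕ, poch a n * poch b n / (poch c n * (n ! : ℝ)) * z ^ n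

/-! With `θ = x d/dx` and `φ(x) = 4x / (1 + x)²`, one has `θφ = (1 - x) / (1 + x) * φ`. Transporting
the hypergeometric equation of the left-hand series along `φ` and that of the right-hand series
along `x ↦ x²` shows that both sides of Gauss's formula satisfy
`θ(θ + 2b - 1) y = x² (θ + 2a)(θ + 2(a - b) + 1) y`. The indicial roots at `0` are `0` and `1 - 2b`,
and `1 - 2b` is not a positive integer, so an analytic solution is determined by its value at `0`
and the two germs agree. The identity theorem on the segment from `0` to `x` concludes: `φ` is
increasing on `(-1, 1)`, so `|φ| < 1` at `x` propagates to the whole segment.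
-/

open Filter Topology

section EulerOperator

variable {𝕜 : Type*} [NontriviallyNormedField 𝕜] {f g w u s : 𝕜 → 𝕜} {x : 𝕜}

/-- The Euler operator `θ = x d/dx`. -/
noncomputable def eulerOp (f : 𝕜 → 𝕜) (x : 𝕜) : 𝕜 := x * deriv f x

namespace eulerOp

lemma congr (h : f =ᶠ[𝓝 x] g) : eulerOp f =ᶠ[𝓝 x] eulerOp g := by
  filter_upwards [h.deriv] with y hy
  rw [eulerOp, eulerOp, hy]

lemma add (hf : DifferentiableAt 𝕜 f x) (hg : DifferentiableAt 𝕜 g x) :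
    eulerOp (f + g) x = eulerOp f x + eulerOp g x := by
  simp only [eulerOp, deriv_add hf hg, mul_add]

lemma sub (hf : DifferentiableAt 𝕜 f x) (hg : DifferentiableAt 𝕜 g x) :
    eulerOp (f - g) x = eulerOp f x - eulerOp g x := by
  simp only [eulerOp, deriv_sub hf hg, mul_sub]

lemma const_mul (c : 𝕜) (f : 𝕜 → 𝕜) (x : 𝕜) : eulerOp (fun t ↦ c * f t) x = c * eulerOp f x := by
  simp only [eulerOp, deriv_const_mul_field']
  ring

lemma mul (hf : DifferentiableAt 𝕜 f x) (hg : DifferentiableAt 𝕜 g x) :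
    eulerOp (f * g) x = eulerOp f x * g x + f x * eulerOp g x := by
  simp only [eulerOp, deriv_mul hf hg]
  ring

lemma pow (n : ℕ) (x : 𝕜) : eulerOp (fun t ↦ t ^ n) x = n * x ^ n := by
  cases n with
  | zero => simp [eulerOp]
  | succ n => simp only [eulerOp, deriv_pow_field, Nat.add_sub_cancel]; ring

lemma comp (hw : DifferentiableAt 𝕜 w (u x)) (hu : DifferentiableAt 𝕜 u x)
    (hs : eulerOp u x = s x * u x) : eulerOp (w ∘ u) x = s x * eulerOp w (u x) := by
  rw [eulerOp] at hs
  rw [eulerOp, eulerOp, deriv_comp x hw hu]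
  linear_combination deriv w (u x) * hs

lemma analyticAt [CompleteSpace 𝕜] (hf : AnalyticAt 𝕜 f x) : AnalyticAt 𝕜 (eulerOp f) x :=
  analyticAt_id.mul hf.deriv

lemma hasFPowerSeriesAt_ofScalars [CompleteSpace 𝕜] {k : ℕ → 𝕜}
    (hf : HasFPowerSeriesAt f (.ofScalars 𝕜 k) 0) :
    HasFPowerSeriesAt (eulerOp f) (.ofScalars 𝕜 fun n ↦ n * k n) 0 := by
  obtain ⟨r, hr⟩ := hf
  rw [hasFPowerSeriesAt_iff]
  filter_upwards [hasFPowerSeriesAt_iff.1 hr.fderiv.hasFPowerSeriesAt] with z hz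
  have hderiv := ((ContinuousLinearMap.apply 𝕜 𝕜 (1 : 𝕜)).hasSum hz).mul_left z
  rw [← hasSum_nat_add_iff' 1]
  simp only [map_smul, ContinuousLinearMap.apply_apply,
    FormalMultilinearSeries.derivSeries_coeff_one, FormalMultilinearSeries.coeff_ofScalars,
    nsmul_eq_mul, Nat.cast_add, Nat.cast_one, smul_eq_mul, zero_add, fderiv_eq_smul_deriv, one_mul,
    eulerOp, Finset.range_one, Finset.sum_singleton, pow_zero, Nat.cast_zero, zero_mul, mul_zero,
    sub_zero] at hderiv ⊢
  refine hderiv.congr_fun fun n ↦ ?_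
  ring

lemma eventuallyEq_pow_mul [CompleteSpace 𝕜] {n : ℕ} (hg : AnalyticAt 𝕜 g 0)
    (hf : f =ᶠ[𝓝 0] fun x ↦ x ^ n * g x) :
    eulerOp f =ᶠ[𝓝 0] fun x ↦ x ^ n * (n * g x + eulerOp g x) := by
  filter_upwards [congr hf, hg.eventually_analyticAt] with x hx hgx
  rw [hx, show (fun x ↦ x ^ n * g x) = (fun x ↦ x ^ n) * g from rfl,
    mul (differentiableAt_pow n) hgx.differentiableAt, pow]
  ring

lemma mul_comp [CompleteSpace 𝕜] (hg : AnalyticAt 𝕜 g x) (hw : AnalyticAt 𝕜 w (u x))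
    (hu : AnalyticAt 𝕜 u x) (hs : eulerOp u =ᶠ[𝓝 x] s * u) :
    eulerOp (g * w ∘ u) =ᶠ[𝓝 x] eulerOp g * w ∘ u + (g * s) * eulerOp w ∘ u := by
  filter_upwards [hg.eventually_analyticAt, hu.continuousAt.eventually hw.eventually_analyticAt,
    hu.eventually_analyticAt, hs] with y hgy hwy huy hsy
  rw [mul hgy.differentiableAt (hwy.differentiableAt.comp y huy.differentiableAt),
    comp hwy.differentiableAt huy.differentiableAt hsy]
  simp only [Pi.add_apply, Pi.mul_apply, Function.comp_apply]
  ring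

lemma eulerOp_mul_comp [CompleteSpace 𝕜] (hg : AnalyticAt 𝕜 g x) (hw : AnalyticAt 𝕜 w (u x))
    (hu : AnalyticAt 𝕜 u x) (hs_an : AnalyticAt 𝕜 s x) (hs : eulerOp u =ᶠ[𝓝 x] s * u) :
    eulerOp (eulerOp (g * w ∘ u)) =ᶠ[𝓝 x] eulerOp (eulerOp g) * w ∘ u
      + (2 * eulerOp g * s + g * eulerOp s) * eulerOp w ∘ u
      + (g * s ^ 2) * eulerOp (eulerOp w) ∘ u := by
  have hθw := analyticAt hw
  filter_upwards [congr (mul_comp hg hw hu hs), mul_comp (analyticAt hg) hw hu hs,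
    mul_comp (hg.mul hs_an) hθw hu hs, hg.eventually_analyticAt, hs_an.eventually_analyticAt,
    ((analyticAt hg).mul (hw.comp hu)).eventually_analyticAt,
    ((hg.mul hs_an).mul (hθw.comp hu)).eventually_analyticAt]
    with y hθ hfst hsnd hgy hsy hfst_an hsnd_an
  rw [hθ, add hfst_an.differentiableAt hsnd_an.differentiableAt, hfst, hsnd]
  simp only [Pi.add_apply, Pi.mul_apply, Pi.pow_apply, Pi.ofNat_apply, Function.comp_apply,
    mul hgy.differentiableAt hsy.differentiableAt]
  ring

end eulerOp

lemma indicial_analyticOrderNatAt_eq_zero [CompleteSpace 𝕜] {p q r y : 𝕜 → 𝕜}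
    (hp : ContinuousAt p 0) (hq : ContinuousAt q 0) (hr : ContinuousAt r 0)
    (hy : AnalyticAt 𝕜 y 0) (hy_ne : analyticOrderAt y 0 ≠ ⊤)
    (hode : ∀ᶠ x in 𝓝 0, p x * eulerOp (eulerOp y) x + q x * eulerOp y x + r x * y x = 0) :
    p 0 * (analyticOrderNatAt y 0 : 𝕜) ^ 2 + q 0 * analyticOrderNatAt y 0 + r 0 = 0 := by
  obtain ⟨g, hg, hg0, hyg⟩ := hy.analyticOrderAt_ne_top.1 hy_ne
  generalize analyticOrderNatAt y 0 = n at hyg ⊢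
  simp only [sub_zero, smul_eq_mul] at hyg
  set g₁ : 𝕜 → 𝕜 := fun x ↦ n * g x + eulerOp g x with hg₁_def
  set g₂ : 𝕜 → 𝕜 := fun x ↦ n * g₁ x + eulerOp g₁ x with hg₂_def
  have hg₁ : AnalyticAt 𝕜 g₁ 0 := (analyticAt_const.mul hg).add (eulerOp.analyticAt hg)
  have hg₂ : AnalyticAt 𝕜 g₂ 0 := (analyticAt_const.mul hg₁).add (eulerOp.analyticAt hg₁)
  have hθy : eulerOp y =ᶠ[𝓝 0] fun x ↦ x ^ n * g₁ x := eulerOp.eventuallyEq_pow_mul hg hyg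
  have hθθy : eulerOp (eulerOp y) =ᶠ[𝓝 0] fun x ↦ x ^ n * g₂ x :=
    eulerOp.eventuallyEq_pow_mul hg₁ hθy
  -- Substituting `y = x ^ n * g` turns the equation into `x ^ n * R x = 0`.
  set R : 𝕜 → 𝕜 := fun x ↦ p x * g₂ x + q x * g₁ x + r x * g x with hR_def
  have hR_cont : ContinuousAt R 0 :=
    ((hp.mul hg₂.continuousAt).add (hq.mul hg₁.continuousAt)).add (hr.mul hg.continuousAt)
  have hR_zero : ∀ᶠ x in 𝓝[≠] 0, R x = 0 := by
    filter_upwards [nhdsWithin_le_nhds (hode.and (hyg.and (hθy.and hθθy))), self_mem_nhdsWithin]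
      with x ⟨hx, hyx, hθx, hθθx⟩ hx0
    refine mul_left_cancel₀ (pow_ne_zero n hx0) ?_
    rw [hyx, hθx, hθθx] at hx
    linear_combination hx
  have hR0 : R 0 = 0 :=
    tendsto_nhds_unique (hR_cont.tendsto.mono_left nhdsWithin_le_nhds)
      (tendsto_const_nhds.congr' (hR_zero.mono fun _ h ↦ h.symm))
  refine mul_left_cancel₀ hg0 ?_
  simp only [hR_def, hg₂_def, hg₁_def, eulerOp, zero_mul, add_zero] at hR0
  linear_combination hR0

end EulerOperator

section HypergeometricEquation

variable {𝕜 : Type*} [NontriviallyNormedField 𝕜]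

/-- The hypergeometric equation `θ(θ + c - 1) y = x ^ m (θ + a)(θ + b) y` as an identity of germs
at `0`. Gauss's equation is the case `m = 1`; the parameter `m` makes the class of equations stable
under the substitutions `x ↦ x ^ n`. -/
def HypergeometricEq (m : ℕ) (a b c : 𝕜) (y : 𝕜 → 𝕜) : Prop :=
  ∀ᶠ x in 𝓝 0, eulerOp (eulerOp y) x + (c - 1) * eulerOp y x =
    x ^ m * (eulerOp (eulerOp y) x + (a + b) * eulerOp y x + a * b * y x)

namespace HypergeometricEq

variable [CompleteSpace 𝕜] {m : ℕ} {a b c : 𝕜} {g w y y₁ y₂ : 𝕜 → 𝕜}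

lemma sub (h₁ : HypergeometricEq m a b c y₁) (h₂ : HypergeometricEq m a b c y₂)
    (hy₁ : AnalyticAt 𝕜 y₁ 0) (hy₂ : AnalyticAt 𝕜 y₂ 0) :
    HypergeometricEq m a b c (y₁ - y₂) := by
  have hθ : eulerOp (y₁ - y₂) =ᶠ[𝓝 0] eulerOp y₁ - eulerOp y₂ := by
    filter_upwards [hy₁.eventually_analyticAt, hy₂.eventually_analyticAt] with x hx₁ hx₂
    exact eulerOp.sub hx₁.differentiableAt hx₂.differentiableAt
  filter_upwards [h₁, h₂, hθ, eulerOp.congr hθ, (eulerOp.analyticAt hy₁).eventually_analyticAt,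
    (eulerOp.analyticAt hy₂).eventually_analyticAt] with x hx₁ hx₂ hθx hθθx han₁ han₂
  rw [hθθx, eulerOp.sub han₁.differentiableAt han₂.differentiableAt, hθx, Pi.sub_apply,
    Pi.sub_apply]
  linear_combination hx₁ - hx₂

lemma eventuallyEq_zero [CharZero 𝕜] (h : HypergeometricEq m a b c y) (hm : m ≠ 0)
    (hc : ∀ k : ℕ, c + k ≠ 0) (hy : AnalyticAt 𝕜 y 0) (hy0 : y 0 = 0) : y =ᶠ[𝓝 0] 0 := by
  by_contra hne
  have htop : analyticOrderAt y 0 ≠ ⊤ := mt analyticOrderAt_eq_top.1 hne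
  have hindicial := indicial_analyticOrderNatAt_eq_zero (p := fun x ↦ 1 - x ^ m)
    (q := fun x ↦ c - 1 - (a + b) * x ^ m) (r := fun x ↦ -(a * b) * x ^ m)
    (by fun_prop) (by fun_prop) (by fun_prop) hy htop
    (by filter_upwards [h] with x hx; linear_combination hx)
  have horder : analyticOrderNatAt y 0 ≠ 0 := fun h0 ↦
    hy.analyticOrderAt_ne_zero.2 hy0 (by rw [← Nat.cast_analyticOrderNatAt htop, h0, Nat.cast_zero])
  obtain ⟨k, hk⟩ := Nat.exists_eq_succ_of_ne_zero horder
  rw [hk] at hindicial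
  simp only [ne_eq, hm, not_false_eq_true, zero_pow, sub_zero, mul_zero, add_zero, one_mul,
    Nat.succ_eq_add_one] at hindicial
  refine mul_ne_zero (Nat.cast_ne_zero.2 k.succ_ne_zero) (hc k) ?_
  push_cast at hindicial ⊢
  linear_combination hindicial

lemma eventuallyEq [CharZero 𝕜] (h₁ : HypergeometricEq m a b c y₁)
    (h₂ : HypergeometricEq m a b c y₂) (hm : m ≠ 0) (hc : ∀ k : ℕ, c + k ≠ 0)
    (hy₁ : AnalyticAt 𝕜 y₁ 0) (hy₂ : AnalyticAt 𝕜 y₂ 0) (h0 : y₁ 0 = y₂ 0) : y₁ =ᶠ[𝓝 0] y₂ := by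
  have hsub := (h₁.sub h₂ hy₁ hy₂).eventuallyEq_zero hm hc (hy₁.sub hy₂) (sub_eq_zero.2 h0)
  filter_upwards [hsub] with x hx using sub_eq_zero.1 hx

lemma comp_pow {n : ℕ} (h : HypergeometricEq m a b c w) (hn : n ≠ 0) (hw : AnalyticAt 𝕜 w 0) :
    HypergeometricEq (n * m) (n * a) (n * b) (n * (c - 1) + 1) (fun x ↦ w (x ^ n)) := by
  have htendsto : Tendsto (fun x : 𝕜 ↦ x ^ n) (𝓝 0) (𝓝 0) :=
    (continuous_pow n).tendsto' 0 0 (zero_pow hn)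
  have hθ {v : 𝕜 → 𝕜} (hv : AnalyticAt 𝕜 v 0) :
      eulerOp (fun x ↦ v (x ^ n)) =ᶠ[𝓝 0] fun x ↦ n * eulerOp v (x ^ n) := by
    filter_upwards [htendsto.eventually hv.eventually_analyticAt] with x hvx
    exact eulerOp.comp (s := fun _ ↦ (n : 𝕜)) hvx.differentiableAt (differentiableAt_pow n)
      (eulerOp.pow n x)
  filter_upwards [htendsto.eventually h, hθ hw, eulerOp.congr (hθ hw),
    hθ (eulerOp.analyticAt hw)] with x hx hθx hθθx hθwx
  rw [hθθx, eulerOp.const_mul, hθwx, hθx, pow_mul]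
  linear_combination (n : 𝕜) ^ 2 * hx

end HypergeometricEq

lemma ordinaryHypergeometricCoefficient_succ [CharZero 𝕜] {a b c : 𝕜} {n : ℕ} (hc : c + n ≠ 0) :
    (n + 1) * (c + n) * ordinaryHypergeometricCoefficient a b c (n + 1) =
      (a + n) * (b + n) * ordinaryHypergeometricCoefficient a b c n := by
  have hn : (n : 𝕜) + 1 ≠ 0 := n.cast_add_one_ne_zero
  simp only [ordinaryHypergeometricCoefficient, ascPochhammer_succ_eval,
    Nat.factorial_succ, Nat.cast_mul, Nat.cast_succ, mul_inv]
  field_simp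

end HypergeometricEquation

section OrdinaryHypergeometric

variable {𝕂 : Type*} [RCLike 𝕂] (a b c : 𝕂)

lemma one_le_ordinaryHypergeometricSeries_radius :
    1 ≤ (ordinaryHypergeometricSeries 𝕂 a b c).radius := by
  by_cases h : ∀ k : ℕ, (k : 𝕂) ≠ -a ∧ (k : 𝕂) ≠ -b ∧ (k : 𝕂) ≠ -c
  · exact (ordinaryHypergeometricSeries_radius_eq_one 𝕂 a b c h).ge
  · suffices (ordinaryHypergeometricSeries 𝕂 a b c).radius = ⊤ from this ▸ le_top
    push Not at h
    obtain ⟨k, hk⟩ := h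
    refine FormalMultilinearSeries.radius_eq_top_of_forall_image_add_eq_zero _ (k + 1) fun n ↦
      ordinaryHypergeometricSeries_eq_zero_of_neg_nat a b c (k := k) ?_ (by lia)
    tauto

lemma hasFPowerSeriesOnBall_ordinaryHypergeometric :
    HasFPowerSeriesOnBall (₂F₁ a b c) (ordinaryHypergeometricSeries 𝕂 a b c) 0 1 :=
  ((ordinaryHypergeometricSeries 𝕂 a b c).hasFPowerSeriesOnBall (one_pos.trans_le
    (one_le_ordinaryHypergeometricSeries_radius a b c))).mono one_pos
    (one_le_ordinaryHypergeometricSeries_radius a b c)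

lemma analyticAt_ordinaryHypergeometric {z : 𝕂} (hz : ‖z‖ < 1) : AnalyticAt 𝕂 (₂F₁ a b c) z :=
  (hasFPowerSeriesOnBall_ordinaryHypergeometric a b c).analyticAt_of_mem (by
    simpa [Metric.mem_eball, edist_zero_right, ← ofReal_norm] using hz)

variable {c}

lemma hypergeometricEq_ordinaryHypergeometric (hc : ∀ k : ℕ, c + k ≠ 0) :
    HypergeometricEq 1 a b c (₂F₁ a b c) := by
  have h₀ := (hasFPowerSeriesOnBall_ordinaryHypergeometric a b c).hasFPowerSeriesAt
  have h₁ := eulerOp.hasFPowerSeriesAt_ofScalars h₀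
  have h₂ := eulerOp.hasFPowerSeriesAt_ofScalars h₁
  filter_upwards [hasFPowerSeriesAt_iff.1 h₀, hasFPowerSeriesAt_iff.1 h₁,
    hasFPowerSeriesAt_iff.1 h₂] with z hz₀ hz₁ hz₂
  simp only [ordinaryHypergeometricSeries, FormalMultilinearSeries.coeff_ofScalars, zero_add,
    smul_eq_mul] at hz₀ hz₁ hz₂
  have hleft := hz₂.add (hz₁.mul_left (c - 1))
  have hright := ((hz₂.add (hz₁.mul_left (a + b))).add (hz₀.mul_left (a * b))).mul_left (z ^ 1)
  refine hleft.unique ((hasSum_nat_add_iff' 1).1 ?_)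
  simp only [Finset.sum_range_one, Nat.cast_zero, zero_mul, mul_zero, add_zero, sub_zero]
  refine hright.congr_fun fun n ↦ ?_
  have hsucc := ordinaryHypergeometricCoefficient_succ (a := a) (b := b) (hc n)
  push_cast
  linear_combination z ^ (n + 1) * hsucc

end OrdinaryHypergeometric

section QuadraticMap

variable {𝕜 : Type*} [NontriviallyNormedField 𝕜] {a b p x : 𝕜} {g w : 𝕜 → 𝕜}

/-- The substitution `x ↦ 4x / (1 + x)²` of Gauss's quadratic transformation. -/
def quadraticMap (x : 𝕜) : 𝕜 := 4 * x / (1 + x) ^ 2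

lemma analyticAt_quadraticMap (hx : 1 + x ≠ 0) : AnalyticAt 𝕜 quadraticMap x :=
  (analyticAt_const.mul analyticAt_id).div ((analyticAt_const.add analyticAt_id).pow 2)
    (pow_ne_zero 2 hx)

@[simp]
lemma quadraticMap_zero : quadraticMap (0 : 𝕜) = 0 := by
  simp [quadraticMap]

lemma eventually_one_add_ne_zero : ∀ᶠ x : 𝕜 in 𝓝 0, 1 + x ≠ 0 :=
  (continuousAt_const.add continuousAt_id).eventually_ne (by simp)

lemma eulerOp_quadraticMap (hx : 1 + x ≠ 0) :
    eulerOp quadraticMap x = (1 - x) / (1 + x) * quadraticMap x := by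
  have hderiv : HasDerivAt quadraticMap _ x := ((hasDerivAt_id' x).const_mul 4).fun_div
    (((hasDerivAt_id' x).const_add 1).fun_pow 2) (pow_ne_zero 2 hx)
  rw [eulerOp, hderiv.deriv, quadraticMap]
  field_simp
  push_cast
  ring

lemma eulerOp_div_one_add (p q : 𝕜) (hx : 1 + x ≠ 0) :
    eulerOp (fun t ↦ (p + q * t) / (1 + t)) x = (q - p) * x / (1 + x) ^ 2 := by
  have hderiv : HasDerivAt (fun t ↦ (p + q * t) / (1 + t)) _ x :=
    (((hasDerivAt_id' x).const_mul q).const_add p).fun_div ((hasDerivAt_id' x).const_add 1) hx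
  rw [eulerOp, hderiv.deriv]
  ring

-- The hypothesis on `g` is the differential equation of `(1 + x) ^ p`.
lemma eulerOp_eulerOp_of_eq_div_one_add_mul [CompleteSpace 𝕜] (hg : AnalyticAt 𝕜 g 0)
    (hθg : ∀ᶠ x in 𝓝 0, eulerOp g x = p * x / (1 + x) * g x) :
    ∀ᶠ x in 𝓝 0, eulerOp (eulerOp g) x = (p * x + (p * x) ^ 2) / (1 + x) ^ 2 * g x := by
  have hfactor {x : 𝕜} (hx : 1 + x ≠ 0) : AnalyticAt 𝕜 (fun t ↦ (0 + p * t) / (1 + t)) x :=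
    AnalyticAt.div (by fun_prop) (by fun_prop) hx
  have hθg' : eulerOp g =ᶠ[𝓝 0] (fun x ↦ (0 + p * x) / (1 + x)) * g := by
    filter_upwards [hθg] with x hx
    rw [hx, Pi.mul_apply, zero_add]
  filter_upwards [eventually_one_add_ne_zero, hθg, eulerOp.congr hθg',
    hg.eventually_analyticAt] with x hx hgx hggx hgan
  rw [hggx, eulerOp.mul (hfactor hx).differentiableAt hgan.differentiableAt,
    eulerOp_div_one_add 0 p hx, hgx]
  field_simp
  ring

lemma HypergeometricEq.mul_comp_quadraticMap [CompleteSpace 𝕜]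
    (h : HypergeometricEq 1 a b (2 * b) w) (hw : AnalyticAt 𝕜 w 0) (hg : AnalyticAt 𝕜 g 0)
    (hθg : ∀ᶠ x in 𝓝 0, eulerOp g x = -(2 * a) * x / (1 + x) * g x) :
    HypergeometricEq 2 (2 * a) (2 * (a - b) + 1) (2 * b) (g * w ∘ quadraticMap) := by
  set s : 𝕜 → 𝕜 := fun x ↦ (1 + -1 * x) / (1 + x)
  have hs : AnalyticAt 𝕜 s 0 := AnalyticAt.div (by fun_prop) (by fun_prop) (by simp)
  have hu : AnalyticAt 𝕜 (quadraticMap : 𝕜 → 𝕜) 0 := analyticAt_quadraticMap (by simp)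
  have hθu : eulerOp quadraticMap =ᶠ[𝓝 0] s * quadraticMap := by
    filter_upwards [eventually_one_add_ne_zero] with x hx
    rw [eulerOp_quadraticMap hx, Pi.mul_apply]
    ring
  have hw' : AnalyticAt 𝕜 w (quadraticMap 0) := by rwa [quadraticMap_zero]
  have hu_tendsto : Tendsto quadraticMap (𝓝 (0 : 𝕜)) (𝓝 0) := by
    simpa using hu.continuousAt.tendsto
  filter_upwards [eventually_one_add_ne_zero, hu_tendsto.eventually h, hθg,
    eulerOp_eulerOp_of_eq_div_one_add_mul hg hθg, eulerOp.mul_comp hg hw' hu hθu,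
    eulerOp.eulerOp_mul_comp hg hw' hu hs hθu] with x hx hhyp hgx hggx hθ hθθ
  rw [hθθ, hθ]
  simp only [Pi.add_apply, Pi.mul_apply, Pi.pow_apply, Pi.ofNat_apply, Function.comp_apply,
    hgx, hggx, s, eulerOp_div_one_add 1 (-1) hx]
  rw [pow_one] at hhyp
  generalize eulerOp (eulerOp w) (quadraticMap x) = w₂ at *
  generalize eulerOp w (quadraticMap x) = w₁ at *
  generalize w (quadraticMap x) = w₀ at *
  rw [quadraticMap] at hhyp
  field_simp at hhyp ⊢
  linear_combination g x * (1 - x) * (1 + x) * hhyp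

end QuadraticMap

lemma mul_ordinaryHypergeometric_comp_quadraticMap_eventuallyEq {𝕂 : Type*} [RCLike 𝕂]
    {a b : 𝕂} {g : 𝕂 → 𝕂} (hb : ∀ k : ℕ, 2 * b + k ≠ 0) (hg : AnalyticAt 𝕂 g 0) (hg0 : g 0 = 1)
    (hθg : ∀ᶠ x in 𝓝 0, eulerOp g x = -(2 * a) * x / (1 + x) * g x) :
    g * ₂F₁ a b (2 * b) ∘ quadraticMap =ᶠ[𝓝 0]
      fun x ↦ ₂F₁ a (a - b + 1 / 2) (b + 1 / 2) (x ^ 2) := by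
  have hb' : ∀ k : ℕ, b + 1 / 2 + k ≠ 0 := fun k hk ↦
    hb (2 * k + 1) (by push_cast; linear_combination 2 * hk)
  have hF (a b c : 𝕂) : AnalyticAt 𝕂 (₂F₁ a b c : 𝕂 → 𝕂) 0 :=
    analyticAt_ordinaryHypergeometric a b c (by simp)
  have hleft := (hypergeometricEq_ordinaryHypergeometric a b hb).mul_comp_quadraticMap
    (hF _ _ _) hg hθg
  have hright : HypergeometricEq 2 (2 * a) (2 * (a - b) + 1) (2 * b)
      fun x ↦ ₂F₁ a (a - b + 1 / 2) (b + 1 / 2) (x ^ 2) := by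
    convert (hypergeometricEq_ordinaryHypergeometric a (a - b + 1 / 2) hb').comp_pow
      two_ne_zero (hF _ _ _) using 1 <;> push_cast <;> ring
  refine hleft.eventuallyEq hright two_ne_zero hb (hg.mul ((hF _ _ _).comp_of_eq
    (analyticAt_quadraticMap (by simp)) quadraticMap_zero)) ?_ ?_
  · exact (hF _ _ _).comp_of_eq (analyticAt_id.pow 2) (by simp)
  · simp [hg0]

lemma analyticAt_one_add_rpow (p : ℝ) {x : ℝ} (hx : 1 + x ≠ 0) :
    AnalyticAt ℝ (fun t : ℝ ↦ (1 + t) ^ p) x :=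
  ((Real.contDiffAt_rpow_const_of_ne hx).analyticAt).fun_comp
    (analyticAt_const.add analyticAt_id)

lemma eulerOp_one_add_rpow (p : ℝ) {x : ℝ} (hx : 1 + x ≠ 0) :
    eulerOp (fun t : ℝ ↦ (1 + t) ^ p) x = p * x / (1 + x) * (1 + x) ^ p := by
  rw [eulerOp, (((hasDerivAt_id' x).const_add 1).rpow_const (Or.inl hx)).deriv,
    Real.rpow_sub_one hx]
  ring

lemma monotoneOn_quadraticMap : MonotoneOn (quadraticMap : ℝ → ℝ) (Set.Ioo (-1) 1) := by
  rintro u ⟨hu, _⟩ v ⟨hv, hv'⟩ huv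
  rw [quadraticMap, quadraticMap, div_le_div_iff₀ (pow_pos (by linarith) 2)
    (pow_pos (by linarith) 2)]
  nlinarith [mul_nonneg (sub_nonneg.2 huv) (by nlinarith : 0 ≤ 1 - u * v)]

lemma abs_quadraticMap_le_of_mem_uIcc {x y : ℝ} (hx : |x| < 1) (hy : y ∈ Set.uIcc 0 x) :
    |quadraticMap y| ≤ |quadraticMap x| := by
  have hsub : Set.uIcc 0 x ⊆ Set.Ioo (-1) 1 :=
    Set.ordConnected_Ioo.uIcc_subset (by simp) (abs_lt.1 hx)
  simpa using Set.abs_sub_left_of_mem_uIcc ((monotoneOn_quadraticMap.mono hsub).mapsTo_uIcc hy)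

lemma F_eq_ordinaryHypergeometric (a b c : ℝ) : F a b c = ₂F₁ a b c := by
  ext z
  rw [ordinaryHypergeometric_eq_tsum]
  refine tsum_congr fun n ↦ ?_
  rw [poch, poch, poch, smul_eq_mul, div_eq_mul_inv, mul_inv]
  ring

theorem gauss_quadratic (a b : ℝ) (hb : ∀ k : ℕ, 2 * b + (k : ℝ) ≠ 0)
    (x : ℝ) (hx : |x| < 1) (hx2 : |4 * x / (1 + x) ^ 2| < 1) :
    (1 + x) ^ (-(2 * a)) * F a b (2 * b) (4 * x / (1 + x) ^ 2) =
      F a (a - b + 1/2) (b + 1/2) (x ^ 2) := by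
  simp only [F_eq_ordinaryHypergeometric]
  have habs {y : ℝ} (hy : y ∈ Set.uIcc 0 x) : |y| < 1 :=
    lt_of_le_of_lt (by simpa using Set.abs_sub_left_of_mem_uIcc hy) hx
  have hne {y : ℝ} (hy : |y| < 1) : 1 + y ≠ 0 := by linarith [(abs_lt.1 hy).1]
  have hgerm := mul_ordinaryHypergeometric_comp_quadraticMap_eventuallyEq hb
    (analyticAt_one_add_rpow (-(2 * a)) (by simp)) (by simp) (by
      filter_upwards [eventually_one_add_ne_zero] with y hy using eulerOp_one_add_rpow _ hy)
  refine AnalyticOnNhd.eqOn_of_preconnected_of_eventuallyEq (𝕜 := ℝ) (fun y hy ↦ ?_)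
    (fun y hy ↦ ?_) isPreconnected_uIcc Set.left_mem_uIcc hgerm Set.right_mem_uIcc
  · have hy1 := hne (habs hy)
    exact (analyticAt_one_add_rpow _ hy1).mul <| (analyticAt_ordinaryHypergeometric _ _ _
      ((abs_quadraticMap_le_of_mem_uIcc hx hy).trans_lt hx2)).comp (analyticAt_quadraticMap hy1)
  · refine (analyticAt_ordinaryHypergeometric _ _ _ ?_).fun_comp (analyticAt_id.pow 2)
    simpa using habs hy
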